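/- For every λ > 0 and every y ∈ ℝ, ∫_0^∞ (1 - Φ((y - x)/(2λ) + λ))·e^{-x} dx = 1 - Φ(y/(2λ) + λ) + e^{-y}·(1 - Φ(λ - y/(2λ))), where Φ denotes the standard normal distribution function. -/

import Mathlib

open MeasureTheory Filter Real Set Topology

noncomputable def stdNormalCDF (t : ℝ) : ℝ :=
  (Real.sqrt (2 * Real.pi))⁻¹ * ∫ s in Set.Iic t, Real.exp (-(s ^ 2) / 2)

/-!
By symmetry, `x ↦ 1 - Φ((y - x)/(2λ) + λ)` is the distribution function of a Gaussian variable `X`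
with mean `y + 2λ²` and variance `4λ²`. By Fubini, the integral is
`E[exp (-max 0 X)] = P(X ≤ 0) + E[exp (-X); X > 0]`. Exponential tilting turns the law of `X` into
the Gaussian with mean `y - 2λ²` and the same variance, so the last term is
`E[exp (-X)] = exp (-y)` times the probability that this shifted Gaussian is positive.
-/

open ProbabilityTheory
open scoped NNReal

section CumulativeDistribution

variable (μ : Measure ℝ)

lemma one_sub_cdf_eq_real_Ioi [IsProbabilityMeasure μ] (x : ℝ) :
    1 - cdf μ x = μ.real (Ioi x) := by
  rw [cdf_eq_real, ← probReal_compl_eq_one_sub measurableSet_Iic, compl_Iic]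

lemma cdf_map_neg [IsProbabilityMeasure μ] [NullSingletonClass μ] (x : ℝ) :
    cdf (μ.map Neg.neg) x = 1 - cdf μ (-x) := by
  have := Measure.isProbabilityMeasure_map (μ := μ) (f := Neg.neg) (by fun_prop)
  rw [cdf_eq_real, map_measureReal_apply measurable_neg measurableSet_Iic,
    one_sub_cdf_eq_real_Ioi, measureReal_congr Ioi_ae_eq_Ici]
  simp

lemma cdf_map_sub_div_const [IsProbabilityMeasure μ] {σ : ℝ} (hσ : 0 < σ) (m x : ℝ) :
    cdf (μ.map fun z ↦ (z - m) / σ) ((x - m) / σ) = cdf μ x := by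
  have := Measure.isProbabilityMeasure_map (μ := μ) (f := fun z ↦ (z - m) / σ) (by fun_prop)
  have preimage_Iic : (fun z ↦ (z - m) / σ) ⁻¹' Iic ((x - m) / σ) = Iic x := by
    ext z
    simp [div_le_div_iff_of_pos_right hσ]
  rw [cdf_eq_real, map_measureReal_apply (by fun_prop) measurableSet_Iic, preimage_Iic,
    cdf_eq_real]

variable {t : ℝ}

lemma integrable_indicator_Ici_exp_mul [IsFiniteMeasure μ] (ht : t < 0) (c : ℝ) :
    Integrable (fun p : ℝ × ℝ ↦ (Ici p.2).indicator (fun x ↦ exp (t * x)) p.1)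
      ((volume.restrict (Ioi c)).prod μ) :=
  ((integrableOn_exp_mul_Ioi ht c).comp_fst μ).indicator
    (measurableSet_le measurable_snd measurable_fst)

lemma setIntegral_Ioi_indicator_Ici_exp_mul (ht : t < 0) (c s : ℝ) :
    ∫ x in Ioi c, (Ici s).indicator (fun x ↦ exp (t * x)) x = exp (t * max c s) / -t := by
  rw [setIntegral_indicator measurableSet_Ici,
    setIntegral_congr_set ((ae_eq_refl (Ioi c)).inter Ioi_ae_eq_Ici.symm), Ioi_inter_Ioi,
    integral_exp_mul_Ioi ht, neg_div, div_neg]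

lemma integral_Ioi_cdf_mul_exp_mul [IsProbabilityMeasure μ] (ht : t < 0) (c : ℝ) :
    ∫ x in Ioi c, cdf μ x * exp (t * x) = (∫ s, exp (t * max c s) ∂μ) / -t := by
  have cdf_mul_eq (x : ℝ) :
      cdf μ x * exp (t * x) = ∫ s, (Ici s).indicator (fun x ↦ exp (t * x)) x ∂μ := by
    rw [cdf_eq_real, ← smul_eq_mul, ← integral_indicator_const _ measurableSet_Iic]
    -- `s ∈ Iic x` and `x ∈ Ici s` both unfold to `s ≤ x`.
    rfl
  calc ∫ x in Ioi c, cdf μ x * exp (t * x)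
      = ∫ x in Ioi c, ∫ s, (Ici s).indicator (fun x ↦ exp (t * x)) x ∂μ := by
        simp only [cdf_mul_eq]
    _ = ∫ s, (∫ x in Ioi c, (Ici s).indicator (fun x ↦ exp (t * x)) x) ∂μ :=
        integral_integral_swap (integrable_indicator_Ici_exp_mul μ ht c)
    _ = (∫ s, exp (t * max c s) ∂μ) / -t := by
        simp only [setIntegral_Ioi_indicator_Ici_exp_mul ht, integral_div]

lemma integral_exp_mul_max [IsFiniteMeasure μ] (ht : t ≤ 0) (c : ℝ) :
    ∫ s, exp (t * max c s) ∂μ =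
      exp (t * c) * μ.real (Iic c) + ∫ s in Ioi c, exp (t * s) ∂μ := by
  have integrable_exp : Integrable (fun s ↦ exp (t * max c s)) μ := by
    refine .of_bound (C := exp (t * c)) (by fun_prop) (ae_of_all _ fun s ↦ ?_)
    rw [norm_of_nonneg (exp_nonneg _), exp_le_exp]
    exact mul_le_mul_of_nonpos_left (le_max_left c s) ht
  rw [← integral_add_compl (measurableSet_Iic (a := c)) integrable_exp, compl_Iic]
  congr 1
  · rw [setIntegral_congr_fun measurableSet_Iic fun s hs ↦ by rw [max_eq_left hs],
      setIntegral_const, smul_eq_mul, mul_comm]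
  · exact setIntegral_congr_fun measurableSet_Ioi fun s hs ↦ by rw [max_eq_right (le_of_lt hs)]

end CumulativeDistribution

section Gaussian

variable (m : ℝ)

lemma gaussianReal_map_sub_div_const {σ : ℝ} (hσ : σ ≠ 0) :
    (gaussianReal m (.mk (σ ^ 2) (sq_nonneg σ))).map (fun z ↦ (z - m) / σ) =
      gaussianReal 0 1 := by
  have sq_ne_zero : NNReal.mk (σ ^ 2) (sq_nonneg σ) ≠ 0 := by
    simpa [← NNReal.coe_inj] using hσ
  have comp_eq : (fun z ↦ (z - m) / σ) = (· / σ) ∘ (· - m) := rfl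
  rw [comp_eq, ← Measure.map_map (by fun_prop) (by fun_prop), gaussianReal_map_sub_const,
    gaussianReal_map_div_const, sub_self, zero_div, div_self sq_ne_zero]

variable (v : ℝ≥0) (t : ℝ)

lemma gaussianReal_tilted_mul :
    (gaussianReal m v).tilted (t * ·) = gaussianReal (m + v * t) v := by
  have := isProbabilityMeasure_tilted (integrable_exp_mul_gaussianReal (μ := m) (v := v) t)
  have mgf_eq : mgf id (gaussianReal (m + v * t) v) =
      mgf id ((gaussianReal m v).tilted (t * ·)) := by
    ext u
    have mgf_tilted : mgf id ((gaussianReal m v).tilted (t * ·)) u =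
        mgf id (gaussianReal m v) (t + u) / mgf id (gaussianReal m v) t := by
      simp only [mgf, integral_exp_tilted, Pi.add_apply, id, add_mul]
    rw [mgf_tilted]
    simp only [mgf_id_gaussianReal, ← exp_sub]
    ring_nf
  refine Measure.ext_of_complexMGF_id_eq (funext fun z ↦ ?_) |>.symm
  exact eqOn_complexMGF_of_mgf mgf_eq (by simp [integrableExpSet_id_gaussianReal])

lemma setIntegral_exp_mul_gaussianReal (s : Set ℝ) :
    ∫ x in s, exp (t * x) ∂(gaussianReal m v) =
      exp (m * t + v * t ^ 2 / 2) * (gaussianReal (m + v * t) v).real s := by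
  have mgf_eq := congrFun (mgf_fun_id_gaussianReal (μ := m) (v := v)) t
  have real_eq := setIntegral_tilted_mul_eq_mgf (μ := gaussianReal m v) (X := fun x ↦ x)
    (t := t) (fun _ ↦ (1 : ℝ)) s
  rw [gaussianReal_tilted_mul, mgf_eq] at real_eq
  simp only [setIntegral_const, smul_eq_mul, mul_one, integral_div] at real_eq
  rw [real_eq, mul_div_cancel₀ _ (exp_ne_zero _)]

variable {t}

lemma integral_Ioi_cdf_gaussianReal_mul_exp_mul (ht : t < 0) (c : ℝ) :
    ∫ x in Ioi c, cdf (gaussianReal m v) x * exp (t * x) =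
      (exp (t * c) * cdf (gaussianReal m v) c +
        exp (m * t + v * t ^ 2 / 2) * (1 - cdf (gaussianReal (m + v * t) v) c)) / -t := by
  rw [integral_Ioi_cdf_mul_exp_mul _ ht, integral_exp_mul_max _ ht.le,
    setIntegral_exp_mul_gaussianReal, cdf_eq_real (gaussianReal m v), one_sub_cdf_eq_real_Ioi]

end Gaussian

section StandardNormal

lemma stdNormalCDF_eq_cdf (x : ℝ) : stdNormalCDF x = cdf (gaussianReal 0 1) x := by
  rw [cdf_eq_real, measureReal_def, gaussianReal_apply_eq_integral _ one_ne_zero,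
    ENNReal.toReal_ofReal (integral_nonneg fun s ↦ gaussianPDFReal_nonneg 0 1 s)]
  simp [stdNormalCDF, gaussianPDFReal, integral_const_mul]

lemma stdNormalCDF_neg (x : ℝ) : stdNormalCDF (-x) = 1 - stdNormalCDF x := by
  have := nullSingletonClass_gaussianReal (μ := 0) one_ne_zero
  have map_neg : (gaussianReal 0 1).map Neg.neg = gaussianReal 0 1 := by
    simpa using gaussianReal_map_neg (μ := 0) (v := 1)
  simpa [stdNormalCDF_eq_cdf, map_neg] using cdf_map_neg (gaussianReal 0 1) (-x)

lemma stdNormalCDF_sub_div {σ : ℝ} (hσ : 0 < σ) (m x : ℝ) :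
    stdNormalCDF ((x - m) / σ) = cdf (gaussianReal m (.mk (σ ^ 2) (sq_nonneg σ))) x := by
  rw [stdNormalCDF_eq_cdf, ← gaussianReal_map_sub_div_const m hσ.ne', cdf_map_sub_div_const _ hσ]

end StandardNormal

theorem integral_one_sub_Phi_exp_neg (lam y : ℝ) (hlam : 0 < lam) :
    ∫ x in Set.Ioi (0 : ℝ),
        (1 - stdNormalCDF ((y - x) / (2 * lam) + lam)) * Real.exp (-x) =
      1 - stdNormalCDF (y / (2 * lam) + lam) +
        Real.exp (-y) * (1 - stdNormalCDF (lam - y / (2 * lam))) := by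
  set v : ℝ≥0 := .mk ((2 * lam) ^ 2) (sq_nonneg _) with hv
  have one_sub_eq_cdf (x : ℝ) : 1 - stdNormalCDF ((y - x) / (2 * lam) + lam) =
      cdf (gaussianReal (y + 2 * lam ^ 2) v) x := by
    rw [← stdNormalCDF_neg, ← stdNormalCDF_sub_div (by positivity)]
    congr 1
    field_simp
    ring
  have shifted_eq_cdf : stdNormalCDF (lam - y / (2 * lam)) =
      cdf (gaussianReal (y + 2 * lam ^ 2 + v * -1) v) 0 := by
    rw [← stdNormalCDF_sub_div (by positivity)]
    congr 1
    rw [hv, NNReal.coe_mk]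
    field_simp
    ring
  have mgf_exponent : (y + 2 * lam ^ 2) * -1 + v * (-1) ^ 2 / 2 = -y := by
    rw [hv, NNReal.coe_mk]
    ring
  have integral_eq :=
    integral_Ioi_cdf_gaussianReal_mul_exp_mul (y + 2 * lam ^ 2) v neg_one_lt_zero 0
  rw [← shifted_eq_cdf, mgf_exponent, ← one_sub_eq_cdf 0] at integral_eq
  simpa [one_sub_eq_cdf] using integral_eq
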